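/- Let A be a Hermitian positive definite complex s×s matrix. Then for every z ∈ ℂˢ, ∫_{ℂˢ} exp(−2i·Im(z*w)) · exp(−w*Aw) d²ˢw/πˢ = det(A)⁻¹ · exp(−z*A⁻¹z). -/

import Mathlib

open MeasureTheory Matrix
open scoped ComplexOrder ENNReal

/-- The reference measure `μ(d²ˢw) = d²ˢw / πˢ` on `ℂˢ ≅ ℝ²ˢ`:
Lebesgue measure divided by `πˢ`. -/
noncomputable def gmeasure (s : ℕ) : Measure (Fin s → ℂ) :=
  (ENNReal.ofReal Real.pi ^ s)⁻¹ • (volume : Measure (Fin s → ℂ))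

/-! The quadratic form can be diagonalized by a single complex congruence `A = Bᴴ D B`: writing
`2A = (A + Aᴴ) - i · i(A - Aᴴ)`, one diagonalizes the positive definite `A + Aᴴ` and the Hermitian
`i(A - Aᴴ)` simultaneously. The substitution `v = B w` has real Jacobian `|det B|²`, which is the
factor relating `det A` to `det D`, and the remaining integral is a product of integrals over `ℂ`,
each a two-dimensional real Gaussian with a complex linear term. The linear terms `p w` and `w* q`
are kept independent, so that `-2i Im(z*w) = -z*w + w*z` is the case `p = -z*`, `q = z`. -/

theorem integral_gmeasure {E : Type*} [NormedAddCommGroup E] [NormedSpace ℝ E] {s : ℕ}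
    (f : (Fin s → ℂ) → E) : ∫ w, f w ∂(gmeasure s) = (Real.pi ^ s)⁻¹ • ∫ w, f w := by
  rw [gmeasure, integral_smul_measure, ENNReal.toReal_inv, ENNReal.toReal_pow,
    ENNReal.toReal_ofReal Real.pi_pos.le]

theorem integral_cexp_add_sub_mul_conj_mul_self {d : ℂ} (hd : 0 < d.re) (p q : ℂ) :
    ∫ w : ℂ, Complex.exp (p * w + star w * q - d * (star w * w)) =
      Real.pi / d * Complex.exp (p * q / d) := by
  have hd' : d ≠ 0 := by
    rintro rfl
    simp at hd
  have h_coord (v : Fin 2 → ℝ) :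
      p * Complex.measurableEquivPi.symm v + star (Complex.measurableEquivPi.symm v) * q
          - d * (star (Complex.measurableEquivPi.symm v) * Complex.measurableEquivPi.symm v) =
        -d * ∑ i, (v i : ℂ) ^ 2 + ∑ i, ![p + q, Complex.I * (p - q)] i * v i := by
    simp only [Complex.measurableEquivPi_symm_apply, star_add, star_mul', Complex.star_def,
      Complex.conj_ofReal, Complex.conj_I, Fin.sum_univ_two, cons_val_zero, cons_val_one]
    linear_combination (d * (v 1 : ℂ) ^ 2) * Complex.I_sq
  rw [← Complex.volume_preserving_equiv_pi.symm.integral_comp']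
  simp_rw [h_coord]
  rw [GaussianFourier.integral_cexp_neg_mul_sum_add hd]
  congr 1
  · simp
  · simp only [Fin.sum_univ_two, cons_val_zero, cons_val_one]
    congr 1
    field_simp
    linear_combination (p - q) ^ 2 * Complex.I_sq

theorem neg_two_mul_I_mul_im (u : ℂ) : -(2 * Complex.I * (u.im : ℂ)) = star u - u := by
  rw [Complex.star_def, ← neg_sub, Complex.sub_conj, Complex.ofReal_mul, Complex.ofReal_ofNat]
  ring

theorem exp_neg_two_mul_I_mul_im_mul_exp_neg {ι : Type*} [Fintype ι] (A : Matrix ι ι ℂ)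
    (z w : ι → ℂ) :
    Complex.exp (-(2 * Complex.I * ((star z ⬝ᵥ w).im : ℂ))) *
        Complex.exp (-(star w ⬝ᵥ A *ᵥ w)) =
      Complex.exp (-star z ⬝ᵥ w + star w ⬝ᵥ z - star w ⬝ᵥ A *ᵥ w) := by
  rw [← Complex.exp_add, neg_two_mul_I_mul_im, ← star_dotProduct, neg_dotProduct,
    neg_add_eq_sub, sub_eq_add_neg _ (star w ⬝ᵥ A *ᵥ w)]

section

variable {𝕜 ι : Type*} [RCLike 𝕜] [Fintype ι] [DecidableEq ι]

open scoped MatrixOrder in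
theorem exists_simultaneous_diagonalization {P K : Matrix ι ι 𝕜} (hP : P.PosDef)
    (hK : K.IsHermitian) :
    ∃ B : Matrix ι ι 𝕜, IsUnit B ∧ P = Bᴴ * B ∧
      ∃ c : ι → ℝ, K = Bᴴ * diagonal (fun i ↦ (c i : 𝕜)) * B := by
  obtain ⟨C, hC, hPC : P = Cᴴ * C⟩ :=
    CStarAlgebra.isStrictlyPositive_iff_eq_star_mul_self.mp hP.isStrictlyPositive
  have hC' : IsUnit C.det := (isUnit_iff_isUnit_det C).mp hC
  have hT : ((C⁻¹)ᴴ * K * C⁻¹).IsHermitian := isHermitian_conjTranspose_mul_mul _ hK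
  let U : Matrix ι ι 𝕜 := hT.eigenvectorUnitary
  have hU : U * Uᴴ = 1 := Unitary.coe_mul_star_self hT.eigenvectorUnitary
  have h_spec : (C⁻¹)ᴴ * K * C⁻¹ = U * diagonal (fun i ↦ (hT.eigenvalues i : 𝕜)) * Uᴴ :=
    hT.spectral_theorem.trans (Unitary.conjStarAlgAut_apply _ _)
  refine ⟨Uᴴ * C, (IsUnit.of_mul_eq_one_right _ hU).mul hC, ?_, hT.eigenvalues, ?_⟩
  · calc P = Cᴴ * (U * Uᴴ) * C := by rw [hU, Matrix.mul_one, hPC]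
      _ = (Uᴴ * C)ᴴ * (Uᴴ * C) := by
        simp only [conjTranspose_mul, conjTranspose_conjTranspose, Matrix.mul_assoc]
  · calc K = Cᴴ * ((C⁻¹)ᴴ * K * C⁻¹) * C := by
          simp only [← Matrix.mul_assoc, ← conjTranspose_mul, nonsing_inv_mul C hC',
            conjTranspose_one, Matrix.one_mul, nonsing_inv_mul_cancel_right _ _ hC']
      _ = Cᴴ * (U * diagonal (fun i ↦ (hT.eigenvalues i : 𝕜)) * Uᴴ) * C :=
          congrArg (Cᴴ * · * C) h_spec
      _ = (Uᴴ * C)ᴴ * diagonal (fun i ↦ (hT.eigenvalues i : 𝕜)) * (Uᴴ * C) := by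
          simp only [conjTranspose_mul, conjTranspose_conjTranspose, Matrix.mul_assoc]

theorem exists_eq_conjTranspose_mul_diagonal_mul {A : Matrix ι ι ℂ} (hA : (A + Aᴴ).PosDef) :
    ∃ B : Matrix ι ι ℂ, IsUnit B ∧
      ∃ d : ι → ℂ, (∀ i, 0 < (d i).re) ∧ A = Bᴴ * diagonal d * B := by
  have hK : (Complex.I • (A - Aᴴ)).IsHermitian := by
    simp [IsHermitian, conjTranspose_smul, conjTranspose_sub, ← smul_neg]
  obtain ⟨B, hB, hP, c, hc⟩ := exists_simultaneous_diagonalization hA hK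
  refine ⟨B, hB, fun i ↦ (1 - Complex.I * c i) / 2, fun i ↦ by simp, ?_⟩
  have h_diag : diagonal (fun i ↦ (1 - Complex.I * c i) / 2) =
      (2⁻¹ : ℂ) • (1 - Complex.I • diagonal fun i ↦ (c i : ℂ)) := by
    rw [← diagonal_one, ← diagonal_smul, diagonal_sub, ← diagonal_smul]
    congr with i
    simp [div_eq_inv_mul]
  calc A = (2⁻¹ : ℂ) • ((A + Aᴴ) - Complex.I • Complex.I • (A - Aᴴ)) := by
        rw [smul_smul, Complex.I_mul_I]
        module
    _ = (2⁻¹ : ℂ) • (Bᴴ * B - Complex.I • (Bᴴ * diagonal (fun i ↦ (c i : ℂ)) * B)) :=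
        congrArg₂ (fun P K ↦ (2⁻¹ : ℂ) • (P - Complex.I • K)) hP hc
    _ = Bᴴ * diagonal (fun i ↦ (1 - Complex.I * c i) / 2) * B := by
        rw [h_diag]
        simp [Matrix.mul_sub, Matrix.sub_mul]

theorem integral_comp_mulVec {E : Type*} [NormedAddCommGroup E] [NormedSpace ℝ E]
    {B : Matrix ι ι ℂ} (hB : IsUnit B) (g : (ι → ℂ) → E) :
    ∫ w, g (B *ᵥ w) = (‖B.det‖ ^ 2)⁻¹ • ∫ v, g v := by
  let f : (ι → ℂ) →ₗ[ℝ] (ι → ℂ) := (toLin' B).restrictScalars ℝ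
  have hf : LinearMap.det f = ‖B.det‖ ^ 2 := by
    rw [LinearMap.det_restrictScalars, LinearMap.det_toLin', Algebra.norm_complex_apply,
      Complex.normSq_eq_norm_sq]
  have hf_ne : LinearMap.det f ≠ 0 := by
    rw [hf]
    exact pow_ne_zero 2 (norm_ne_zero_iff.mpr ((isUnit_iff_isUnit_det B).mp hB).ne_zero)
  have hf_emb : MeasurableEmbedding f :=
    (f.isClosedEmbedding_of_injective
      (LinearMap.ker_eq_bot.mpr (mulVec_injective_of_isUnit hB))).measurableEmbedding
  calc ∫ w, g (f w) = ∫ v, g v ∂(volume.map f) := (hf_emb.integral_map g).symm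
    _ = (‖B.det‖ ^ 2)⁻¹ • ∫ v, g v := by
      rw [Measure.map_linearMap_addHaar_eq_smul_addHaar volume hf_ne, integral_smul_measure, hf,
        abs_of_nonneg (by positivity), ENNReal.toReal_ofReal (by positivity)]

theorem integral_cexp_add_sub_diagonal {d : ι → ℂ} (hd : ∀ i, 0 < (d i).re) (p q : ι → ℂ) :
    ∫ w : ι → ℂ, Complex.exp (p ⬝ᵥ w + star w ⬝ᵥ q - star w ⬝ᵥ diagonal d *ᵥ w) =
      Real.pi ^ Fintype.card ι / (diagonal d).det *
        Complex.exp (p ⬝ᵥ (diagonal d)⁻¹ *ᵥ q) := by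
  have h_exp (w : ι → ℂ) :
      Complex.exp (p ⬝ᵥ w + star w ⬝ᵥ q - star w ⬝ᵥ diagonal d *ᵥ w) =
        ∏ i, Complex.exp (p i * w i + star (w i) * q i - d i * (star (w i) * w i)) := by
    rw [← Complex.exp_sum, Finset.sum_sub_distrib, Finset.sum_add_distrib]
    simp only [dotProduct, mulVec_diagonal, Pi.star_apply, mul_left_comm]
  have h_inv : (diagonal d)⁻¹ = diagonal d⁻¹ := by
    refine inv_eq_right_inv ?_
    rw [diagonal_mul_diagonal, ← diagonal_one]
    congr with i
    exact mul_inv_cancel₀ fun h ↦ by simpa [h] using hd i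
  calc ∫ w : ι → ℂ, Complex.exp (p ⬝ᵥ w + star w ⬝ᵥ q - star w ⬝ᵥ diagonal d *ᵥ w)
      = ∏ i, ∫ v : ℂ, Complex.exp (p i * v + star v * q i - d i * (star v * v)) := by
        simp_rw [h_exp]
        exact integral_fintype_prod_volume_eq_prod
          (fun i (v : ℂ) ↦ Complex.exp (p i * v + star v * q i - d i * (star v * v)))
    _ = ∏ i, (Real.pi / d i * Complex.exp (p i * q i / d i)) :=
        Finset.prod_congr rfl fun i _ ↦ integral_cexp_add_sub_mul_conj_mul_self (hd i) (p i) (q i)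
    _ = Real.pi ^ Fintype.card ι / (diagonal d).det *
          Complex.exp (p ⬝ᵥ (diagonal d)⁻¹ *ᵥ q) := by
        rw [h_inv, Finset.prod_mul_distrib, Finset.prod_div_distrib, ← Complex.exp_sum,
          det_diagonal, Finset.prod_const, Finset.card_univ]
        simp only [dotProduct, mulVec_diagonal, Pi.inv_apply, div_eq_mul_inv, mul_assoc, mul_comm]

theorem integral_cexp_add_sub_conjTranspose_mul_mul {B : Matrix ι ι ℂ} (hB : IsUnit B)
    (A : Matrix ι ι ℂ) (p q : ι → ℂ) :
    ∫ w : ι → ℂ, Complex.exp (p ⬝ᵥ w + star w ⬝ᵥ q - star w ⬝ᵥ (Bᴴ * A * B) *ᵥ w) =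
      (‖B.det‖ ^ 2)⁻¹ • ∫ v : ι → ℂ,
        Complex.exp ((p ᵥ* B⁻¹) ⬝ᵥ v + star v ⬝ᵥ (B⁻¹)ᴴ *ᵥ q - star v ⬝ᵥ A *ᵥ v) := by
  have hB' : IsUnit B.det := (isUnit_iff_isUnit_det B).mp hB
  have h_exponent (w : ι → ℂ) :
      p ⬝ᵥ w + star w ⬝ᵥ q - star w ⬝ᵥ (Bᴴ * A * B) *ᵥ w =
        (p ᵥ* B⁻¹) ⬝ᵥ (B *ᵥ w) + star (B *ᵥ w) ⬝ᵥ (B⁻¹)ᴴ *ᵥ q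
          - star (B *ᵥ w) ⬝ᵥ A *ᵥ (B *ᵥ w) := by
    simp only [star_mulVec, ← dotProduct_mulVec, mulVec_mulVec, ← conjTranspose_mul,
      nonsing_inv_mul B hB', conjTranspose_one, one_mulVec, Matrix.mul_assoc]
  simp_rw [h_exponent]
  exact integral_comp_mulVec hB fun v ↦
    Complex.exp ((p ᵥ* B⁻¹) ⬝ᵥ v + star v ⬝ᵥ (B⁻¹)ᴴ *ᵥ q - star v ⬝ᵥ A *ᵥ v)

theorem stmt7_general {A : Matrix ι ι ℂ} (hA : (A + Aᴴ).PosDef) (p q : ι → ℂ) :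
    ∫ w : ι → ℂ, Complex.exp (p ⬝ᵥ w + star w ⬝ᵥ q - star w ⬝ᵥ A *ᵥ w) =
      Real.pi ^ Fintype.card ι / A.det * Complex.exp (p ⬝ᵥ A⁻¹ *ᵥ q) := by
  obtain ⟨B, hB, d, hd, rfl⟩ := exists_eq_conjTranspose_mul_diagonal_mul hA
  have h_det : (Bᴴ * diagonal d * B).det = (‖B.det‖ ^ 2 : ℝ) * (diagonal d).det := by
    rw [det_mul, det_mul, det_conjTranspose, mul_right_comm, Complex.star_def, Complex.conj_mul']
    norm_cast
  have h_inv : (p ᵥ* B⁻¹) ⬝ᵥ (diagonal d)⁻¹ *ᵥ (B⁻¹)ᴴ *ᵥ q =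
      p ⬝ᵥ (Bᴴ * diagonal d * B)⁻¹ *ᵥ q := by
    simp only [Matrix.mul_inv_rev, conjTranspose_nonsing_inv, ← dotProduct_mulVec,
      mulVec_mulVec, Matrix.mul_assoc]
  rw [integral_cexp_add_sub_conjTranspose_mul_mul hB, integral_cexp_add_sub_diagonal hd,
    h_inv, h_det, Complex.real_smul, Complex.ofReal_inv]
  ring

end

/-- Let `A` be a Hermitian positive definite complex `s × s` matrix.  Then for
every `z ∈ ℂˢ`,
`∫ exp(−2i Im(z*w)) exp(−w*Aw) d²ˢw/πˢ = det(A)⁻¹ exp(−z*A⁻¹z)`. -/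
theorem stmt7 {s : ℕ} (A : Matrix (Fin s) (Fin s) ℂ) (hA : A.PosDef)
    (z : Fin s → ℂ) :
    ∫ w : Fin s → ℂ,
        Complex.exp (-(2 * Complex.I * ((star z ⬝ᵥ w).im : ℂ)))
          * Complex.exp (-(star w ⬝ᵥ A.mulVec w)) ∂(gmeasure s)
      = A.det⁻¹ * Complex.exp (-(star z ⬝ᵥ A⁻¹.mulVec z)) := by
  have hA' : (A + Aᴴ).PosDef := hA.add_posSemidef hA.posSemidef.conjTranspose
  simp_rw [exp_neg_two_mul_I_mul_im_mul_exp_neg, integral_gmeasure, stmt7_general hA',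
    Fintype.card_fin, neg_dotProduct, Complex.real_smul, Complex.ofReal_inv, Complex.ofReal_pow]
  field_simp [Real.pi_ne_zero]
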